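/- arXiv:1705.08437 — 4 statements merged into one kernel-verified Lean document; each statement's English description precedes it below -/
import Mathlib

section
/- Let T ≥ 2 and m be integers, let A ∈ F_2^{T×m}, and let k be an integer with ⌈T/2⌉ ≤ k. Let P ∈ F_2^{(T+1)×T} be the matrix whose first T rows form the identity matrix I_T and whose last row is the all-ones row 1_T, and set A_k = P·A. Then every vector in the row space of A (i.e., every vector of the form d·A with d ∈ F_2^T) is the sum of at most k rows of A_k. -/
/-!
A combination of vectors over `F_2` is the sum over its support `S`, and it is also the sum of all
the vectors plus the sum over `Sᶜ`. The two expressions use `#S` and `#Sᶜ + 1` vectors, which is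
`T + 1` in total, so one of them uses at most `⌊(T + 1)/2⌋ = ⌈T/2⌉`.
-/

section

variable {ι M : Type*} [Fintype ι] [AddCommGroup M] [Module (ZMod 2) M]

theorem sum_zmod_two_smul_eq_sum_filter (d : ι → ZMod 2) (v : ι → M) :
    ∑ i, d i • v i = ∑ i with d i = 1, v i := by
  rw [Finset.sum_filter]
  refine Finset.sum_congr rfl fun i _ ↦ ?_
  obtain hd | hd : d i = 0 ∨ d i = 1 := Fin.exists_fin_two.mp ⟨d i, rfl⟩ <;> simp [hd]

theorem sum_eq_sum_univ_add_sum_compl [DecidableEq ι] (S : Finset ι) (v : ι → M) :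
    ∑ i ∈ S, v i = ∑ i, v i + ∑ i ∈ Sᶜ, v i := by
  rw [← ZModModule.sub_eq_add, eq_sub_iff_add_eq, Finset.sum_add_sum_compl]

end

theorem card_le_or_card_compl_lt {ι : Type*} [Fintype ι] [DecidableEq ι] {k : ℕ}
    (hk : (Fintype.card ι + 1) / 2 ≤ k) (S : Finset ι) : S.card ≤ k ∨ Sᶜ.card < k := by
  have hcard : S.card + Sᶜ.card = Fintype.card ι := S.card_add_card_compl
  omega

section

variable {T k : ℕ} {M : Type*} [AddCommGroup M] [Module (ZMod 2) M]

theorem exists_card_le_sum_eq_of_last_eq_sum (hk : (T + 1) / 2 ≤ k) {w : Fin (T + 1) → M}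
    (hw : w (Fin.last T) = ∑ j : Fin T, w j.castSucc) (d : Fin T → ZMod 2) :
    ∃ U : Finset (Fin (T + 1)), U.card ≤ k ∧ ∑ j, d j • w j.castSucc = ∑ i ∈ U, w i := by
  set S : Finset (Fin T) := {j | d j = 1}
  have hS : ∑ j, d j • w j.castSucc = ∑ j ∈ S, w j.castSucc :=
    sum_zmod_two_smul_eq_sum_filter d _
  rcases card_le_or_card_compl_lt (k := k) (by rwa [Fintype.card_fin]) S with hcard | hcard
  · refine ⟨S.map Fin.castSuccEmb, by rwa [Finset.card_map], ?_⟩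
    simp only [hS, Finset.sum_map, Fin.coe_castSuccEmb]
  · have hlast : Fin.last T ∉ Sᶜ.map Fin.castSuccEmb := by simp [Fin.castSucc_ne_last]
    refine ⟨(Sᶜ.map Fin.castSuccEmb).cons (Fin.last T) hlast, ?_, ?_⟩
    · rwa [Finset.card_cons, Finset.card_map]
    · rw [hS, sum_eq_sum_univ_add_sum_compl, Finset.sum_cons, hw, Finset.sum_map]
      simp only [Fin.coe_castSuccEmb]

theorem case_I_construction_general (hk : (T + 1) / 2 ≤ k) (v : Fin T → M)
    (P : Matrix (Fin (T + 1)) (Fin T) (ZMod 2))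
    (hP : ∀ (i : Fin (T + 1)) (j : Fin T),
      P i j = if (i : ℕ) = T then 1 else if (i : ℕ) = (j : ℕ) then 1 else 0)
    (d : Fin T → ZMod 2) :
    ∃ U : Finset (Fin (T + 1)),
      U.card ≤ k ∧ ∑ j, d j • v j = ∑ i ∈ U, ∑ j, P i j • v j := by
  have row_last : ∑ j, P (Fin.last T) j • v j = ∑ j, v j := by simp [hP]
  have row_castSucc (i : Fin T) : ∑ j, P i.castSucc j • v j = v i := by
    simp [hP, i.isLt.ne, ← Fin.ext_iff]
  simpa only [row_castSucc] using
    exists_card_le_sum_eq_of_last_eq_sum (w := fun i ↦ ∑ j, P i j • v j) hk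
      (by simp only [row_last, row_castSucc]) d

end

/-- For `T ≥ 2`, `A ∈ F_2^{T×m}`, `⌈T/2⌉ ≤ k`, and `P ∈ F_2^{(T+1)×T}` obtained by
stacking the identity `I_T` on top of the all-ones row, every vector in the row space of `A`
(i.e. every `d ᵥ* A`) is the sum of at most `k` rows of `A_k = P * A`. -/
theorem case_I_construction
    (T m k : ℕ) (hT : 2 ≤ T) (hk : (T + 1) / 2 ≤ k)
    (A : Matrix (Fin T) (Fin m) (ZMod 2))
    (P : Matrix (Fin (T + 1)) (Fin T) (ZMod 2))
    (hP : ∀ (i : Fin (T + 1)) (j : Fin T),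
      P i j = if (i : ℕ) = T then 1 else if (i : ℕ) = (j : ℕ) then 1 else 0) :
    ∀ d : Fin T → ZMod 2, ∃ U : Finset (Fin (T + 1)),
      U.card ≤ k ∧ Matrix.vecMul d A = ∑ i ∈ U, (P * A) i := by
  simpa only [Matrix.mul_apply_eq_vecMul, Matrix.vecMul_eq_sum] using
    case_I_construction_general hk A P hP
end

section
/- Let T and k be integers with T ≥ 2 and 2 ≤ k < ⌈T/2⌉. Set T_c = ⌈T/(2k−1)⌉, T_last = T − (2k−1)(T_c − 1), and T_ub = 2·(2k+1)^{T_c − 1} if T_last = 1 and T_ub = (2k+1)^{T_c − 1}·(T_last + 2) otherwise. Then there exists a set S ⊆ F_2^T with |S| ≤ T_ub such that every vector of F_2^T is the sum of at most k (not necessarily distinct) elements of S. -/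
/-!
A vector `v` of `F_2^m` with `m ≤ 2k` has at most `k` ones, or else its complement has fewer than
`k` ones. Hence `v`, or `v` minus the all-ones vector, is a sum of few unit vectors, and padding
with zeros writes `v` as a sum of exactly `k` elements of the block set consisting of `0`, the
all-ones vector and the `m` unit vectors. Since all blocks use the same number of summands, the
`i`-th summands of all blocks can be concatenated: the concatenations of block elements generate
`F_2^T` in the same sense, and the sizes multiply.
-/

open scoped Pointwise

/-- `HasAdditiveBasis G k c` says that `G` has an additive basis of order `k` with at most `c`
elements. Sums of exactly `k` elements are required, instead of at most `k`, so that the property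
passes to products. -/
def HasAdditiveBasis (G : Type*) [AddCommMonoid G] (k c : ℕ) : Prop :=
  ∃ A : Finset G, A.card ≤ c ∧ k • (A : Set G) = Set.univ

namespace HasAdditiveBasis

variable {G H M : Type*} [AddCommMonoid G] [AddCommMonoid H] [AddCommMonoid M] {k : ℕ}

theorem exists_multiset {c : ℕ} (h : HasAdditiveBasis G k c) :
    ∃ S : Finset G, S.card ≤ c ∧
      ∀ g : G, ∃ L : Multiset G, Multiset.card L = k ∧ (∀ x ∈ L, x ∈ S) ∧ L.sum = g := by
  obtain ⟨S, hS, hkS⟩ := h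
  refine ⟨S, hS, fun g => ?_⟩
  obtain ⟨f, hf, hfg⟩ := Set.mem_nsmul_iff_sum.1 (hkS ▸ Set.mem_univ g)
  exact ⟨Finset.univ.val.map f, by simp, by simpa using hf, hfg⟩

theorem of_fintype [Fintype G] (hk : k ≠ 0) : HasAdditiveBasis G k (Fintype.card G) :=
  ⟨Finset.univ, le_rfl, by rw [Finset.coe_univ, Set.nsmul_univ hk]⟩

theorem of_surjective {F : Type*} [FunLike F G H] [AddMonoidHomClass F G H] {c : ℕ}
    (h : HasAdditiveBasis G k c) (f : F) (hf : Function.Surjective f) : HasAdditiveBasis H k c := by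
  classical
  obtain ⟨A, hA, hkA⟩ := h
  refine ⟨A.image f, Finset.card_image_le.trans hA, ?_⟩
  rw [Finset.coe_image, ← Set.image_nsmul, hkA, Set.image_univ_of_surjective hf]

theorem prod {a b : ℕ} (hG : HasAdditiveBasis G k a) (hH : HasAdditiveBasis H k b) :
    HasAdditiveBasis (G × H) k (a * b) := by
  obtain ⟨A, hA, hkA⟩ := hG
  obtain ⟨B, hB, hkB⟩ := hH
  refine ⟨A ×ˢ B, ?_, ?_⟩
  · rw [Finset.card_product]
    exact Nat.mul_le_mul hA hB
  · rw [Finset.coe_product, Set.nsmul_prod, hkA, hkB, Set.univ_prod_univ]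

theorem fin_append {m n a b : ℕ} (hm : HasAdditiveBasis (Fin m → M) k a)
    (hn : HasAdditiveBasis (Fin n → M) k b) : HasAdditiveBasis (Fin (m + n) → M) k (a * b) := by
  let concat : ((Fin m → M) × (Fin n → M)) ≃ₗ[ℕ] (Fin (m + n) → M) :=
    (LinearEquiv.sumArrowLequivProdArrow (Fin m) (Fin n) ℕ M).symm ≪≫ₗ
      LinearEquiv.funCongrLeft ℕ M finSumFinEquiv.symm
  exact (hm.prod hn).of_surjective concat concat.surjective

theorem fin_repeat_append {m l a c : ℕ} (hm : HasAdditiveBasis (Fin m → M) k a)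
    (hl : HasAdditiveBasis (Fin l → M) k c) (n : ℕ) :
    HasAdditiveBasis (Fin (m * n + l) → M) k (a ^ n * c) := by
  induction n with
  | zero => rwa [Nat.mul_zero, Nat.zero_add, pow_zero, one_mul]
  | succ n ih =>
    have happend := hm.fin_append ih
    rwa [← mul_assoc, ← pow_succ', ← add_assoc, add_comm m, ← Nat.mul_succ] at happend

end HasAdditiveBasis

theorem hammingNorm_add_hammingNorm_add_one {ι : Type*} [Fintype ι] (v : ι → ZMod 2) :
    hammingNorm v + hammingNorm (v + 1) = Fintype.card ι := by
  have hflip : ∀ x : ZMod 2, x + 1 ≠ 0 ↔ ¬x ≠ 0 := by decide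
  simp only [hammingNorm, Pi.add_apply, Pi.one_apply, hflip]
  exact Finset.card_filter_add_card_filter_not _

/-- The vectors allowed in one block: zero, all-ones and the standard unit vectors. -/
def blockSet (ι : Type*) [Fintype ι] [DecidableEq ι] : Finset (ι → ZMod 2) :=
  insert 0 (insert 1 (Finset.univ.image fun i => Pi.single i 1))

section BlockSet

variable {ι : Type*} [Fintype ι] [DecidableEq ι]

theorem mem_hammingNorm_nsmul_range_single (v : ι → ZMod 2) :
    v ∈ hammingNorm v • Set.range fun i => (Pi.single i 1 : ι → ZMod 2) := by
  have hv : ∑ i with v i ≠ 0, Pi.single i 1 = v := by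
    rw [Finset.sum_filter]
    conv_rhs => rw [← Finset.univ_sum_single v]
    refine Finset.sum_congr rfl fun i _ => ?_
    split_ifs with hi
    · rw [Fin.eq_one_of_ne_zero (v i) hi]
      rfl
    · rw [not_not.1 hi, Pi.single_zero]
  have hsum := Set.finsetSum_mem_finsetSum (Finset.univ.filter fun i => v i ≠ 0)
    (fun _ => Set.range fun i => (Pi.single i 1 : ι → ZMod 2)) (fun i => Pi.single i 1)
    fun i _ => Set.mem_range_self i
  rwa [hv, Finset.sum_const] at hsum

theorem card_blockSet_le : (blockSet ι).card ≤ Fintype.card ι + 2 :=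
  calc (blockSet ι).card ≤ (Finset.univ.image fun i : ι => (Pi.single i 1 : ι → ZMod 2)).card + 2 :=
        (Finset.card_insert_le _ _).trans (Nat.succ_le_succ (Finset.card_insert_le _ _))
    _ ≤ Fintype.card ι + 2 := Nat.add_le_add_right Finset.card_image_le 2

theorem mem_nsmul_blockSet {v : ι → ZMod 2} {j : ℕ} (hv : hammingNorm v ≤ j) :
    v ∈ j • (blockSet ι : Set (ι → ZMod 2)) := by
  refine Set.nsmul_subset_nsmul ?_ ?_ hv (mem_hammingNorm_nsmul_range_single v)
  · rintro _ ⟨i, rfl⟩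
    simp [blockSet]
  · simp [blockSet]

theorem nsmul_blockSet {k : ℕ} (hk : Fintype.card ι ≤ 2 * k) :
    k • (blockSet ι : Set (ι → ZMod 2)) = Set.univ := by
  refine Set.eq_univ_of_forall fun v => ?_
  have hcompl := hammingNorm_add_hammingNorm_add_one v
  rcases le_or_gt (hammingNorm v) k with hv | hv
  · exact mem_nsmul_blockSet hv
  · obtain ⟨j, rfl⟩ : ∃ j, k = j + 1 := Nat.exists_eq_succ_of_ne_zero (by omega)
    have hmem : v + 1 ∈ j • (blockSet ι : Set (ι → ZMod 2)) := mem_nsmul_blockSet (by omega)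
    have hone : (1 : ι → ZMod 2) ∈ (blockSet ι : Set (ι → ZMod 2)) := by simp [blockSet]
    have hv1 : v + 1 + 1 = v := funext fun i => CharTwo.add_cancel_right (v i) 1
    rw [succ_nsmul, ← hv1]
    exact Set.add_mem_add hmem hone

end BlockSet

theorem hasAdditiveBasis_fin_zmod_two {m k : ℕ} (hm : m ≤ 2 * k) :
    HasAdditiveBasis (Fin m → ZMod 2) k (m + 2) :=
  ⟨blockSet (Fin m), by simpa using card_blockSet_le (ι := Fin m), nsmul_blockSet (by simpa)⟩

theorem case_II_construction_general
    (T k m Tc Tlast Tub : ℕ)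
    (hT : 1 ≤ T) (hm : 1 ≤ m) (hmk : m ≤ 2 * k)
    (hTc : Tc = (T + m - 1) / m)
    (hTlast : Tlast = T - m * (Tc - 1))
    (hTub : Tub = if Tlast = 1 then 2 * (m + 2) ^ (Tc - 1)
                  else (m + 2) ^ (Tc - 1) * (Tlast + 2)) :
    ∃ S : Finset (Fin T → ZMod 2), S.card ≤ Tub ∧
      ∀ d : Fin T → ZMod 2, ∃ L : Multiset (Fin T → ZMod 2),
        Multiset.card L = k ∧ (∀ x ∈ L, x ∈ S) ∧ L.sum = d := by
  have hn : Tc - 1 = (T - 1) / m := by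
    rw [hTc, Nat.sub_add_comm hT, Nat.add_div_right _ hm, Nat.succ_sub_one]
  rw [hn] at hTlast hTub
  have hdiv := Nat.div_add_mod (T - 1) m
  have hmod := Nat.mod_lt (T - 1) hm
  have hsplit : T = m * ((T - 1) / m) + Tlast := by omega
  have hblock := hasAdditiveBasis_fin_zmod_two hmk
  have hbasis : HasAdditiveBasis (Fin (m * ((T - 1) / m) + Tlast) → ZMod 2) k Tub := by
    rw [hTub]
    split_ifs with h1
    · have hbit : HasAdditiveBasis (Fin Tlast → ZMod 2) k 2 := by
        simpa [h1] using HasAdditiveBasis.of_fintype (G := Fin Tlast → ZMod 2) (k := k) (by omega)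
      rw [mul_comm 2]
      exact hblock.fin_repeat_append hbit _
    · exact hblock.fin_repeat_append (hasAdditiveBasis_fin_zmod_two (by omega)) _
  rw [← hsplit] at hbasis
  exact hbasis.exists_multiset

/-- Case II upper bound of Theorem 1.  For `2 ≤ k < ⌈T/2⌉`, with
`T_c = ⌈T/(2k−1)⌉`, `T_last = T − (2k−1)(T_c − 1)` and `T_ub` as in (5), there is a set
`S ⊆ F_2^T` with `|S| ≤ T_ub` such that every vector of `F_2^T` is the sum of at most `k`
(not necessarily distinct) elements of `S`. -/
theorem case_II_construction
    (T k Tc Tlast Tub : ℕ)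
    (hT : 2 ≤ T) (hk2 : 2 ≤ k) (hk : k < (T + 1) / 2)
    (hTc : Tc = (T + (2 * k - 1) - 1) / (2 * k - 1))
    (hTlast : Tlast = T - (2 * k - 1) * (Tc - 1))
    (hTub : Tub = if Tlast = 1 then 2 * (2 * k + 1) ^ (Tc - 1)
                  else (2 * k + 1) ^ (Tc - 1) * (Tlast + 2)) :
    ∃ S : Finset (Fin T → ZMod 2), S.card ≤ Tub ∧
      ∀ d : Fin T → ZMod 2, ∃ L : Multiset (Fin T → ZMod 2),
        Multiset.card L ≤ k ∧ (∀ x ∈ L, x ∈ S) ∧ L.sum = d := by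
  obtain ⟨S, hS, h⟩ := case_II_construction_general T k (2 * k - 1) Tc Tlast Tub
    (by omega) (by omega) (by omega) hTc hTlast (by rwa [show 2 * k - 1 + 2 = 2 * k + 1 by omega])
  exact ⟨S, hS, fun d => (h d).imp fun _ hL => ⟨hL.1.le, hL.2⟩⟩
end

section
/- Let T and k be integers with T ≥ 2 and 2 ≤ k < ⌈T/2⌉. Then there exists a set S ⊆ F_2^T with |S| ≤ (2k+1)^{⌈T/(2k−1)⌉} such that every vector of F_2^T is the sum of at most k (not necessarily distinct) elements of S. -/
/-!
Over `F_2`, a vector of length at most `2k` has weight at most `k`, or its complement has weight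
less than `k`. Hence it is a sum of `k` vectors chosen among zero, the all-ones vector and the unit
vectors. Cutting `F_2^T` into `m = ⌈T/(2k-1)⌉` blocks of length at most `2k-1` and allowing every
combination of such block vectors gives a set of at most `(2k+1)^m` vectors: the `k` summands of
the different blocks are added in parallel.
-/

section Sumset

open Finset
open scoped Pointwise

variable {M : Type*} [DecidableEq M]

lemma exists_multiset_of_mem_nsmul [AddCommMonoid M] {s : Finset M} {n : ℕ} {a : M}
    (ha : a ∈ n • s) :
    ∃ L : Multiset M, Multiset.card L = n ∧ (∀ x ∈ L, x ∈ s) ∧ L.sum = a := by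
  obtain ⟨f, hf⟩ := mem_nsmul.1 ha
  refine ⟨List.ofFn fun i => (f i : M), by simp, fun x hx => ?_, by simpa using hf⟩
  obtain ⟨i, rfl⟩ := List.mem_ofFn.1 (Multiset.mem_coe.1 hx)
  exact (f i).2

lemma sum_mem_card_nsmul [AddCommMonoid M] {ι : Type*} {s : Finset M} (t : Finset ι) {f : ι → M}
    (hf : ∀ i ∈ t, f i ∈ s) : ∑ i ∈ t, f i ∈ #t • s := by
  rw [← mem_coe, coe_nsmul, ← sum_const]
  exact Set.finsetSum_mem_finsetSum t _ f hf

lemma nsmul_piFinset {κ : Type*} [Fintype κ] [DecidableEq κ] {N : κ → Type*}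
    [∀ b, AddMonoid (N b)] [∀ b, DecidableEq (N b)] (s : ∀ b, Finset (N b)) (n : ℕ) :
    n • Fintype.piFinset s = Fintype.piFinset fun b => n • s b := by
  induction n with
  | zero => ext; simp [funext_iff]
  | succ n ih => simp only [succ_nsmul, ih, Fintype.piFinset_add]

lemma nsmul_image_eq_univ {N : Type*} [DecidableEq N] [AddMonoid M] [AddMonoid N] [Fintype M]
    [Fintype N] {n : ℕ} {s : Finset M} (hs : n • s = univ) (f : M →+ N)
    (hf : Function.Surjective f) : n • s.image f = univ := by
  rw [← image_nsmul, hs, image_univ_of_surjective hf]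

/-- The additive map reading a vector of blocks, indexed by `κ`, at the positions `e : τ → κ × ι`.
Positions outside the range of `e` are discarded. -/
def readBlocks (N : Type*) [AddZeroClass N] {κ ι τ : Type*} (e : τ → κ × ι) :
    (κ → ι → N) →+ (τ → N) where
  toFun x t := x (e t).1 (e t).2
  map_zero' := rfl
  map_add' _ _ := rfl

lemma readBlocks_surjective (N : Type*) [AddZeroClass N] {κ ι τ : Type*} {e : τ → κ × ι}
    (he : Function.Injective e) : Function.Surjective (readBlocks N e) := fun d =>
  have ⟨x, hx⟩ := he.surjective_comp_right d
  ⟨Function.curry x, hx⟩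

lemma exists_nsmul_eq_univ_of_blocks [AddMonoid M] [Fintype M] {κ ι τ : Type*} [Fintype κ]
    [Fintype ι] [Fintype τ] [DecidableEq ι] [DecidableEq τ] {k : ℕ}
    {B : Finset (ι → M)} (hB : k • B = univ)
    (hcard : Fintype.card τ ≤ Fintype.card κ * Fintype.card ι) :
    ∃ S : Finset (τ → M), #S ≤ #B ^ Fintype.card κ ∧ k • S = univ := by
  classical
  obtain ⟨e⟩ : Nonempty (τ ↪ κ × ι) :=
    Function.Embedding.nonempty_of_card_le (by rwa [Fintype.card_prod])
  have hprod : k • Fintype.piFinset (fun _ : κ => B) = univ := by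
    rw [nsmul_piFinset, hB, Fintype.piFinset_univ]
  refine ⟨(Fintype.piFinset fun _ : κ => B).image (readBlocks M e),
    card_image_le.trans_eq ?_, nsmul_image_eq_univ hprod _ (readBlocks_surjective M e.injective)⟩
  rw [Fintype.card_piFinset, prod_const, card_univ]

end Sumset

section RepetitionColumns

open Finset
open scoped Pointwise

variable {ι : Type*} [Fintype ι]

lemma hammingNorm_one_add (v : ι → ZMod 2) :
    hammingNorm (1 + v) + hammingNorm v = Fintype.card ι := by
  have hflip : ∀ x : ZMod 2, 1 + x ≠ 0 ↔ ¬ x ≠ 0 := by decide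
  simp only [hammingNorm, Pi.add_apply, Pi.one_apply, hflip]
  rw [add_comm, card_filter_add_card_filter_not, card_univ]

variable [DecidableEq ι]

lemma sum_filter_ne_zero_single_one (v : ι → ZMod 2) : ∑ i with v i ≠ 0, Pi.single i 1 = v := by
  have hone : ∀ x : ZMod 2, x ≠ 0 → 1 = x := by decide
  calc ∑ i with v i ≠ 0, Pi.single i (1 : ZMod 2)
      = ∑ i with v i ≠ 0, Pi.single i (v i) :=
        sum_congr rfl fun i hi => by rw [← hone (v i) (mem_filter.1 hi).2]
    _ = ∑ i, Pi.single i (v i) := sum_filter_of_ne fun i _ hi hv => hi (by simp [hv])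
    _ = v := univ_sum_single v

variable (ι) in
/-- The zero vector together with the columns of the standard parity-check matrix of the binary
repetition code of length `|ι| + 1`, namely the unit vectors and the all-ones vector. Including zero
lets sums of at most `k` columns be written as sums of exactly `k` elements. -/
def repetitionColumns : Finset (ι → ZMod 2) :=
  insert 0 (insert 1 (univ.image fun i => Pi.single i 1))

lemma card_repetitionColumns_le : #(repetitionColumns ι) ≤ Fintype.card ι + 2 :=
  calc #(repetitionColumns ι) ≤ #(univ.image fun i : ι => Pi.single i (1 : ZMod 2)) + 1 + 1 :=
        (card_insert_le _ _).trans (Nat.add_le_add_right (card_insert_le _ _) 1)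
    _ ≤ Fintype.card ι + 2 := Nat.add_le_add_right card_image_le 2

lemma mem_nsmul_repetitionColumns_of_hammingNorm_le {v : ι → ZMod 2} {k : ℕ}
    (hv : hammingNorm v ≤ k) : v ∈ k • repetitionColumns ι := by
  have hsum : ∑ i with v i ≠ 0, Pi.single i 1 ∈ hammingNorm v • repetitionColumns ι :=
    sum_mem_card_nsmul _ fun i _ => by simp [repetitionColumns]
  rw [sum_filter_ne_zero_single_one] at hsum
  exact nsmul_subset_nsmul_right (by simp [repetitionColumns]) hv hsum

theorem nsmul_repetitionColumns_eq_univ {k : ℕ} (hk : Fintype.card ι ≤ 2 * k) :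
    k • repetitionColumns ι = univ := by
  refine eq_univ_of_forall fun v => ?_
  rcases le_or_gt (hammingNorm v) k with hlight | hheavy
  · exact mem_nsmul_repetitionColumns_of_hammingNorm_le hlight
  · have hweight := hammingNorm_one_add v
    obtain ⟨l, rfl⟩ : ∃ l, k = l + 1 := ⟨k - 1, by omega⟩
    have hcompl : 1 + v ∈ l • repetitionColumns ι :=
      mem_nsmul_repetitionColumns_of_hammingNorm_le (by omega)
    have hone : 1 ∈ repetitionColumns ι := by simp [repetitionColumns]
    have hflip : 1 + (1 + v) = v := funext fun i => CharTwo.add_cancel_left 1 (v i)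
    rw [succ_nsmul', ← hflip]
    exact add_mem_add hone hcompl

end RepetitionColumns

open scoped Pointwise in
theorem case_II_construction_asymptotic_general {τ : Type*} [Fintype τ] {k : ℕ} (hk : 0 < k) :
    ∃ S : Finset (τ → ZMod 2),
      S.card ≤ (2 * k + 1) ^ (Fintype.card τ ⌈/⌉ (2 * k - 1)) ∧
      ∀ d : τ → ZMod 2, ∃ L : Multiset (τ → ZMod 2),
        Multiset.card L = k ∧ (∀ x ∈ L, x ∈ S) ∧ L.sum = d := by
  classical
  set n := 2 * k - 1
  set m := Fintype.card τ ⌈/⌉ n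
  have hblock : k • repetitionColumns (Fin n) = Finset.univ :=
    nsmul_repetitionColumns_eq_univ (by rw [Fintype.card_fin]; omega)
  have hcover : Fintype.card τ ≤ Fintype.card (Fin m) * Fintype.card (Fin n) := by
    have hn_pos : 0 < n := by omega
    rw [Fintype.card_fin, Fintype.card_fin, mul_comm]
    exact le_smul_ceilDiv hn_pos
  obtain ⟨S, hcard, hS⟩ := exists_nsmul_eq_univ_of_blocks hblock hcover
  refine ⟨S, ?_, fun d => exists_multiset_of_mem_nsmul (hS ▸ Finset.mem_univ d)⟩
  calc S.card ≤ (repetitionColumns (Fin n)).card ^ m := by rwa [Fintype.card_fin] at hcard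
    _ ≤ (2 * k + 1) ^ m := by
      gcongr
      exact card_repetitionColumns_le.trans (by rw [Fintype.card_fin]; omega)

/-- Asymptotic form of the Case II upper bound: for `2 ≤ k < ⌈T/2⌉` there is a
set `S ⊆ F_2^T` with `|S| ≤ (2k+1)^{⌈T/(2k−1)⌉}` such that every vector of `F_2^T` is the sum
of at most `k` (not necessarily distinct) elements of `S`. -/
theorem case_II_construction_asymptotic
    (T k : ℕ) (hT : 2 ≤ T) (hk2 : 2 ≤ k) (hk : k < (T + 1) / 2) :
    ∃ S : Finset (Fin T → ZMod 2),
      S.card ≤ (2 * k + 1) ^ ((T + (2 * k - 1) - 1) / (2 * k - 1)) ∧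
      ∀ d : Fin T → ZMod 2, ∃ L : Multiset (Fin T → ZMod 2),
        Multiset.card L ≤ k ∧ (∀ x ∈ L, x ∈ S) ∧ L.sum = d := by
  obtain ⟨S, hcard, hS⟩ :=
    case_II_construction_asymptotic_general (τ := Fin T) (by omega : 0 < k)
  rw [Fintype.card_fin] at hcard
  exact ⟨S, hcard, fun d => (hS d).imp fun _ hL => ⟨hL.1.le, hL.2⟩⟩
end

section
/- Let T ≥ 2 and k be integers with ⌈T/2⌉ ≤ k < T. Then ∑_{i=1}^{k} C(T+1, i) ≥ 2^T − 1, and therefore the smallest positive integer N satisfying ∑_{i=1}^{k} C(N, i) ≥ 2^T − 1 equals exactly T + 1. -/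
/-!
Adding the term `i = 0` turns `2 ^ T - 1 ≤ ∑_{1 ≤ i ≤ k} C(N, i)` into
`2 ^ T ≤ ∑_{0 ≤ i ≤ k} C(N, i)`. For `N = T + 1` the hypothesis `T ≤ 2k` says that the sum covers at
least half of the row `N` of Pascal's triangle, so by the symmetry of the row it is at least
`2 ^ N / 2`. For `N ≤ T` the sum is at most the corresponding sum over the row `T`, which misses
the last entry of that row because `k < T`.
-/

open Finset

lemma sum_range_succ_eq_add_sum_Icc {M : Type*} [AddCommMonoid M] (f : ℕ → M) (n : ℕ) :
    ∑ i ∈ range (n + 1), f i = f 0 + ∑ i ∈ Icc 1 n, f i := by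
  rw [sum_range_eq_add_Ico f n.add_one_pos, Ico_add_one_right_eq_Icc]

lemma two_pow_sub_one_le_sum_Icc_choose_iff (T N k : ℕ) :
    2 ^ T - 1 ≤ ∑ i ∈ Icc 1 k, N.choose i ↔ 2 ^ T ≤ ∑ i ∈ range (k + 1), N.choose i := by
  rw [tsub_le_iff_left, sum_range_succ_eq_add_sum_Icc, Nat.choose_zero_right]

lemma sum_Ico_choose_eq_sum_range_choose (n r : ℕ) :
    ∑ i ∈ Ico r (n + 1), n.choose i = ∑ i ∈ range (n + 1 - r), n.choose i := by
  calc
    ∑ i ∈ Ico r (n + 1), n.choose i = ∑ i ∈ Ico r (n + 1), n.choose (n - i) :=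
      sum_congr rfl fun i hi => (Nat.choose_symm (Nat.lt_succ_iff.1 (mem_Ico.1 hi).2)).symm
    _ = ∑ i ∈ range (n + 1 - r), n.choose i := by
      rw [sum_Ico_reflect _ _ le_rfl, Nat.sub_self, range_eq_Ico]

lemma two_pow_le_two_mul_sum_range_choose {n r : ℕ} (hn : n < 2 * r) :
    2 ^ n ≤ 2 * ∑ i ∈ range r, n.choose i := by
  calc
    2 ^ n = ∑ i ∈ range (n + 1), n.choose i := (Nat.sum_range_choose n).symm
    _ ≤ ∑ i ∈ range r ∪ Ico r (n + 1), n.choose i :=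
      sum_le_sum_of_subset fun i hi => by simp only [mem_union, mem_range, mem_Ico] at hi ⊢; lia
    _ = ∑ i ∈ range r, n.choose i + ∑ i ∈ Ico r (n + 1), n.choose i :=
      sum_union (range_eq_Ico r ▸ Ico_disjoint_Ico_consecutive 0 r (n + 1))
    _ = ∑ i ∈ range r, n.choose i + ∑ i ∈ range (n + 1 - r), n.choose i := by
      rw [sum_Ico_choose_eq_sum_range_choose]
    _ ≤ ∑ i ∈ range r, n.choose i + ∑ i ∈ range r, n.choose i :=
      Nat.add_le_add_left (sum_le_sum_of_subset (range_mono (by lia))) _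
    _ = 2 * ∑ i ∈ range r, n.choose i := (two_mul _).symm

lemma sum_range_choose_lt_two_pow {n r : ℕ} (hr : r ≤ n) :
    ∑ i ∈ range r, n.choose i < 2 ^ n := by
  calc
    ∑ i ∈ range r, n.choose i ≤ ∑ i ∈ range n, n.choose i :=
      sum_le_sum_of_subset (range_mono hr)
    _ < ∑ i ∈ range n, n.choose i + n.choose n := by simp
    _ = 2 ^ n := by rw [← sum_range_succ, Nat.sum_range_choose]

/-- For `⌈T/2⌉ ≤ k < T`, `∑_{i=1}^k C(T+1,i) ≥ 2^T − 1`, and the smallest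
positive integer `N` with `∑_{i=1}^k C(N,i) ≥ 2^T − 1` is exactly `T + 1`. -/
theorem lemma2_first_bullet
    (T k : ℕ) (hT : 2 ≤ T) (hk : (T + 1) / 2 ≤ k) (hkT : k < T) :
    (2 ^ T - 1 ≤ ∑ i ∈ Finset.Icc 1 k, (T + 1).choose i) ∧
    IsLeast {N : ℕ | 0 < N ∧ 2 ^ T - 1 ≤ ∑ i ∈ Finset.Icc 1 k, N.choose i} (T + 1) := by
  simp only [two_pow_sub_one_le_sum_Icc_choose_iff]
  have reaches : 2 ^ T ≤ ∑ i ∈ range (k + 1), (T + 1).choose i := by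
    have half_row : 2 ^ (T + 1) ≤ 2 * ∑ i ∈ range (k + 1), (T + 1).choose i :=
      two_pow_le_two_mul_sum_range_choose (by lia)
    lia
  refine ⟨reaches, ⟨T.succ_pos, reaches⟩, ?_⟩
  rintro N ⟨-, hN⟩
  contrapose! hN
  calc
    ∑ i ∈ range (k + 1), N.choose i ≤ ∑ i ∈ range (k + 1), T.choose i :=
      sum_le_sum fun i _ => Nat.choose_le_choose i (Nat.lt_succ_iff.1 hN)
    _ < 2 ^ T := sum_range_choose_lt_two_pow hkT
end
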